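/- Let μ > 0 and let γ₁ be a closed regular curve in S² with geodesic curvature satisfying min κ₁ > μ, whose restriction to a closed interval [a₁,b₁] is a negative shell with image Σ₁ = γ₁([a₁,b₁]). Then there exists a μ-circle C such that Σ₁ is contained in the closure of the interior domain of C and the intersection C ∩ Σ₁ consists of exactly two points. -/

import Mathlib

noncomputable section

open Matrix

/-- Euclidean 3-space (as triples of reals). -/
abbrev R3 : Type := Fin 3 → ℝ

/-- The Euclidean inner product on ℝ³. -/
def dot3 (a b : R3) : ℝ := a 0 * b 0 + a 1 * b 1 + a 2 * b 2

/-- The Euclidean norm on ℝ³. -/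
def norm3 (a : R3) : ℝ := Real.sqrt (dot3 a a)

/-- The cross product on ℝ³. -/
def cross3 (a b : R3) : R3 :=
  ![a 1 * b 2 - a 2 * b 1, a 2 * b 0 - a 0 * b 2, a 0 * b 1 - a 1 * b 0]

/-- The determinant of three vectors in ℝ³. -/
def det3 (a b c : R3) : ℝ := dot3 a (cross3 b c)

/-- `γ : ℝ → ℝ³` is a regular curve in the unit sphere S²:
it is smooth, takes values in S², and has nowhere-vanishing derivative. -/
structure IsRegularCurve (γ : ℝ → R3) : Prop where
  smooth : ContDiff ℝ (⊤ : ℕ∞) γ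
  sphere : ∀ s, dot3 (γ s) (γ s) = 1
  reg : ∀ s, deriv γ s ≠ 0

/-- The geodesic curvature `κ(s) = det(γ, γ', γ'')/|γ'|³` of a curve in S². -/
def kappa (γ : ℝ → R3) (s : ℝ) : ℝ :=
  det3 (γ s) (deriv γ s) (deriv (deriv γ) s) / norm3 (deriv γ s) ^ 3

/-- The unit normal `n(s) = (γ × γ')/|γ'|` of a curve in S². -/
def unitNormal (γ : ℝ → R3) (s : ℝ) : R3 :=
  (norm3 (deriv γ s))⁻¹ • cross3 (γ s) (deriv γ s)

/-- `γ` is closed of period `l > 0`. -/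
def HasPeriod (γ : ℝ → R3) (l : ℝ) : Prop := 0 < l ∧ ∀ s, γ (s + l) = γ s

/-- 2×2 complex matrices. -/
abbrev Mat2 := Matrix (Fin 2) (Fin 2) ℂ

def E1 : Mat2 := !![0, Complex.I; Complex.I, 0]
def E2 : Mat2 := !![0, -1; 1, 0]
def E3 : Mat2 := !![Complex.I, 0; 0, -Complex.I]

/-- The identification of ℝ³ with su(2) via the orthonormal basis e₁, e₂, e₃. -/
def toSu2 (v : R3) : Mat2 := (v 0 : ℂ) • E1 + (v 1 : ℂ) • E2 + (v 2 : ℂ) • E3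

/-- The adjoint action `Ad(a)x = a x a⁻¹`. -/
def AdM (a x : Mat2) : Mat2 := a * x * a⁻¹

/-- `c : ℝ → SU(2)` is a lift of the regular curve `γ` in S²:
it is smooth (entrywise), takes values in SU(2), and satisfies
`Ad(c(s))e₃ = γ(s)` and `Ad(c(s))e₁ = γ'(s)/|γ'(s)|` under `toSu2`. -/
structure IsLift (γ : ℝ → R3) (c : ℝ → Mat2) : Prop where
  mem : ∀ s, c s ∈ Matrix.specialUnitaryGroup (Fin 2) ℂ
  smooth : ∀ i j, ContDiff ℝ (⊤ : ℕ∞) fun s => c s i j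
  ad3 : ∀ s, AdM (c s) E3 = toSu2 (γ s)
  ad1 : ∀ s, AdM (c s) E1 = toSu2 ((norm3 (deriv γ s))⁻¹ • deriv γ s)

/-- The entrywise derivative of a matrix-valued curve. -/
def matDeriv (c : ℝ → Mat2) (s : ℝ) : Mat2 :=
  Matrix.of fun i j => deriv (fun t => c t i j) s

/-- The map `f_{γ₁,γ₂}(s₁,s₂) = c₁(0)⁻¹ c₁(s₁) c₂(s₂)⁻¹ c₂(0)` associated to lifts `c₁, c₂`. -/
def fmap (c1 c2 : ℝ → Mat2) (s1 s2 : ℝ) : Mat2 :=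
  (c1 0)⁻¹ * c1 s1 * (c2 s2)⁻¹ * c2 0

/-- `(γ₁, γ₂)` is an admissible pair. -/
structure IsAdmissiblePair (γ1 γ2 : ℝ → R3) : Prop where
  reg1 : IsRegularCurve γ1
  reg2 : IsRegularCurve γ2
  param1 : ∀ s, norm3 (deriv γ1 s) ^ 2 * (1 + kappa γ1 s ^ 2) = 4
  param2 : ∀ s, norm3 (deriv γ2 s) ^ 2 * (1 + kappa γ2 s ^ 2) = 4
  curv : ∀ s1 s2, kappa γ2 s2 < kappa γ1 s1

/-- The restriction of `γ` to `[a,b]` is a shell. -/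
def IsShell (γ : ℝ → R3) (a b : ℝ) : Prop :=
  a < b ∧ Set.InjOn γ (Set.Ico a b) ∧ γ a = γ b ∧
    LinearIndependent ℝ ![deriv γ a, deriv γ b]

/-- A positive shell: `det(γ(a), γ'(a), γ'(b)) < 0`. -/
def IsPositiveShell (γ : ℝ → R3) (a b : ℝ) : Prop :=
  IsShell γ a b ∧ det3 (γ a) (deriv γ a) (deriv γ b) < 0

/-- A negative shell: `det(γ(a), γ'(a), γ'(b)) > 0`. -/
def IsNegativeShell (γ : ℝ → R3) (a b : ℝ) : Prop :=
  IsShell γ a b ∧ 0 < det3 (γ a) (deriv γ a) (deriv γ b)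

/-- The unit sphere S² in ℝ³. -/
def sphere2 : Set R3 := {x | dot3 x x = 1}

/-- The μ-circle with center `o ∈ S²`. -/
def muCircle (μ : ℝ) (o : R3) : Set R3 :=
  {x | dot3 x x = 1 ∧ dot3 x o = μ / Real.sqrt (1 + μ ^ 2)}

/-- The (open) interior domain of the μ-circle with center `o ∈ S²`. -/
def muDisk (μ : ℝ) (o : R3) : Set R3 :=
  {x | dot3 x x = 1 ∧ μ / Real.sqrt (1 + μ ^ 2) < dot3 x o}

def normalize3 (v : R3) : R3 := (norm3 v)⁻¹ • v

/-- `Δ` is the interior domain of the shell `γ|_{[a,b]}`: it is a connected component of the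
complement of the image of the shell in S², and for each `s ∈ (a,b)` the points obtained by
pushing `γ(s)` slightly in the direction `σ • n(s)` (σ = 1 for a positive shell, σ = -1 for a
negative shell) belong to `Δ`. -/
def IsInteriorDomain (γ : ℝ → R3) (a b σ : ℝ) (Δ : Set R3) : Prop :=
  (∃ p ∈ sphere2 \ γ '' Set.Icc a b,
      Δ = connectedComponentIn (sphere2 \ γ '' Set.Icc a b) p) ∧
    ∀ s ∈ Set.Ioo a b, ∃ ε > 0, ∀ δ ∈ Set.Ioo (0 : ℝ) ε,
      normalize3 (γ s + (σ * δ) • unitNormal γ s) ∈ Δ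

/-- The center `o_t = (μ γ(t) + n(t))/√(1+μ²)` of the tangent μ-circle to `γ` at `γ(t)`
on the normal side. -/
def tangentCenter (μ : ℝ) (γ : ℝ → R3) (t : ℝ) : R3 :=
  (Real.sqrt (1 + μ ^ 2))⁻¹ • (μ • γ t + unitNormal γ t)

/-- The rotation of ℝ³ through angle `θ` about the oriented (unit) axis `o`. -/
def rot3 (o : R3) (θ : ℝ) (x : R3) : R3 :=
  Real.cos θ • x + Real.sin θ • cross3 o x + ((1 - Real.cos θ) * dot3 o x) • o

/-- A closed regular curve of period `l` is generic: every self-intersection is a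
transversal double point. -/
def IsGeneric (γ : ℝ → R3) (l : ℝ) : Prop :=
  ∀ s t : ℝ, γ s = γ t → (¬∃ k : ℤ, s - t = k * l) →
    LinearIndependent ℝ ![deriv γ s, deriv γ t] ∧
      ∀ u : ℝ, γ u = γ s → (∃ k : ℤ, u - s = k * l) ∨ (∃ k : ℤ, u - t = k * l)

/-- The number of crossings (self-intersection points) of a closed curve of period `l`. -/
def crossings (γ : ℝ → R3) (l : ℝ) : ℕ :=
  Set.ncard {p : R3 | ∃ s t : ℝ, γ s = p ∧ γ t = p ∧ ¬∃ k : ℤ, s - t = k * l}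

/-- The spherical (geodesic) distance on S³, identified with SU(2):
`dist(A,B) = arccos(Re trace(A Bᴴ)/2)`, which corresponds to the round distance on the
unit sphere S³ ⊂ ℝ⁴. -/
def distS3 (A B : Mat2) : ℝ := Real.arccos ((Matrix.trace (A * Bᴴ)).re / 2)

/-- The extrinsic diameter of the image of the map `f` associated to the lifts `c₁, c₂`. -/
def extDiam (c1 c2 : ℝ → Mat2) : ℝ :=
  sSup {d : ℝ | ∃ s1 s2 u1 u2 : ℝ, d = distS3 (fmap c1 c2 s1 s2) (fmap c1 c2 u1 u2)}

/-- The parallel curve `γ^θ = (cos θ) γ + (sin θ) n`. -/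
def parallelCurve (γ : ℝ → R3) (θ : ℝ) (s : ℝ) : R3 :=
  Real.cos θ • γ s + Real.sin θ • unitNormal γ s

/-- The arclength-type parameter `s(t) = (1/2)∫₀ᵗ |γ'(u)|√(1+κ(u)²) du`. -/
def arcParam (γ : ℝ → R3) (t : ℝ) : ℝ :=
  (1 / 2) * ∫ u in (0 : ℝ)..t, norm3 (deriv γ u) * Real.sqrt (1 + kappa γ u ^ 2)

/-! Put `θ = arccot μ`, the spherical radius of a `μ`-circle, and attach to every parameter `s` the
disk of radius `θ` tangent to the curve at `γ s` on the side of the normal. Nearby points of the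
curve lie strictly inside this disk because the curvature exceeds `μ`. The sign of the shell
says that the arc reaches its end point from outside the disk at `a`, and that it starts by leaving
the disk at `b`.

Let `α` be the last parameter whose disk touches or misses part of the later arc, and let `γ τ` be a
point of contact. The contact is tangential, so the disk at `α` is also the disk at `τ`: for `τ < b`
because `τ` is a local minimum of the height function of that disk, and for `τ = b` because two
distinct disks of the same radius cannot cross compatibly with the position of the arc. The same
last-contact argument applies to the reversed curve and, since `γ t` lies in the disk at `s` exactly
when the centre of the disk at `s` lies in the disk of radius `θ` around `γ t`, to the curve of
centres. There a tangential contact means a coincidence `γ s = γ t`, which injectivity excludes.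
Hence the arc before `α` lies strictly inside the disk at `α` as well, and its boundary is the
circle sought. -/

section SphericalFrame

open Set Filter Topology Module Real RealInnerProductSpace

variable {E : Type*} [NormedAddCommGroup E] [InnerProductSpace ℝ E]

lemma injOn_Ioc_of_injOn_Ico {α β : Type*} [LinearOrder α] {f : α → β} {a b : α}
    (hf : InjOn f (Ico a b)) (hab : f a = f b) : InjOn f (Ioc a b) := by
  have hne : ∀ t ∈ Ioo a b, f t ≠ f b := fun t ht h ↦
    ht.1.ne' (hf ⟨ht.1.le, ht.2⟩ ⟨le_rfl, ht.1.trans ht.2⟩ (h.trans hab.symm))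
  intro s hs t ht h
  rcases hs.2.eq_or_lt with rfl | hsb <;> rcases ht.2.eq_or_lt with rfl | htb
  · rfl
  · exact absurd h.symm (hne t ⟨ht.1, htb⟩)
  · exact absurd h (hne s ⟨hs.1, hsb⟩)
  · exact hf ⟨hs.1.le, hsb⟩ ⟨ht.1.le, htb⟩ h

lemma image_Icc_subset_closure_of_mapsTo_sdiff_finite {X : Type*} [TopologicalSpace X] {f : ℝ → X}
    (hf : Continuous f) {a b : ℝ} (hab : a < b) {S : Set ℝ} (hS : S.Finite) {U : Set X}
    (h : MapsTo f (Icc a b \ S) U) : f '' Icc a b ⊆ closure U := by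
  have hdense : Icc a b ⊆ closure (Ioo a b \ S) := by
    rw [← closure_Ioo hab.ne, sdiff_eq]
    refine closure_minimal (Dense.open_subset_closure_inter ?_ isOpen_Ioo) isClosed_closure
    simpa [compl_eq_univ_sdiff] using dense_univ.sdiff_finite hS
  exact (image_mono hdense).trans ((image_closure_subset_closure_image hf).trans
    (closure_mono (image_subset_iff.mpr fun t ht ↦ h ⟨Ioo_subset_Icc_self ht.1, ht.2⟩)))

lemma eq_of_norm_eq_one_of_one_le_inner {z w : E} (hz : ‖z‖ = 1) (hw : ‖w‖ = 1)
    (h : 1 ≤ ⟪z, w⟫) : z = w :=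
  (inner_eq_one_iff_of_norm_eq_one hz hw).mp
    (le_antisymm (by simpa [hz, hw] using real_inner_le_norm z w) h)

lemma exists_orthonormalBasis_coe_eq {ι : Type*} [Fintype ι] [Nonempty ι] {e : ι → E}
    (he : Orthonormal ℝ e) (hcard : Fintype.card ι = finrank ℝ E) :
    ∃ B : OrthonormalBasis ι ℝ E, ⇑B = e := by
  have hB := coe_basisOfOrthonormalOfCardEqFinrank he hcard
  exact ⟨(basisOfOrthonormalOfCardEqFinrank he hcard).toOrthonormalBasis (by rwa [hB]), by simp⟩

lemma orthonormal_vec3_iff {x y z : E} :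
    Orthonormal ℝ ![x, y, z] ↔ (‖x‖ = 1 ∧ ‖y‖ = 1 ∧ ‖z‖ = 1) ∧
      ⟪x, y⟫ = 0 ∧ ⟪x, z⟫ = 0 ∧ ⟪y, z⟫ = 0 := by
  simp only [orthonormal_vecCons_iff, orthonormal_subsingleton_iff,
    Fin.forall_fin_two, cons_val_zero, cons_val_one, cons_val_fin_one, forall_const]
  tauto

lemma eq_sum_inner_smul_of_orthonormal_vec3 [Fact (finrank ℝ E = 3)] {x y z : E}
    (h : Orthonormal ℝ ![x, y, z]) (w : E) : w = ⟪w, x⟫ • x + ⟪w, y⟫ • y + ⟪w, z⟫ • z := by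
  obtain ⟨B, hB⟩ := exists_orthonormalBasis_coe_eq h
    ((Fintype.card_fin 3).trans (Fact.out : finrank ℝ E = 3).symm)
  simpa [hB, Fin.sum_univ_three, real_inner_comm] using (B.sum_repr' w).symm

lemma norm_smul_add_smul_eq_one {z w : E} (hz : ‖z‖ = 1) (hw : ‖w‖ = 1) (hzw : ⟪z, w⟫ = 0)
    {c d : ℝ} (hcd : c ^ 2 + d ^ 2 = 1) : ‖c • z + d • w‖ = 1 := by
  have h : ⟪c • z, d • w⟫ = 0 := by rw [real_inner_smul_left, real_inner_smul_right, hzw]; simp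
  rw [← sq_eq_sq₀ (norm_nonneg _) zero_le_one, norm_add_sq_real, h, norm_smul, norm_smul, hz, hw]
  simpa using hcd

/-- A curve `x` in the unit sphere together with its unit tangent field `T`, one of its two unit
normal fields `n`, its speed `v` and its turning rate `k`, so that the geodesic curvature with
respect to `n` is `k / v`. On `Icc a b` the speed is positive and the geodesic curvature exceeds
`cot θ`, the geodesic curvature of a circle of spherical radius `θ`. Leaving the choice of `n` free
makes the class of frames stable under time reversal. -/
structure SphericalFrame (E : Type*) [NormedAddCommGroup E] [InnerProductSpace ℝ E]
    (θ a b : ℝ) where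
  x : ℝ → E
  T : ℝ → E
  n : ℝ → E
  v : ℝ → ℝ
  k : ℝ → ℝ
  angle_mem : θ ∈ Ioo 0 (π / 2)
  orthonormal : ∀ s, Orthonormal ℝ ![x s, T s, n s]
  hasDerivAt_x : ∀ s, HasDerivAt x (v s • T s) s
  hasDerivAt_T : ∀ s, HasDerivAt T (k s • n s - v s • x s) s
  hasDerivAt_n : ∀ s, HasDerivAt n (-(k s • T s)) s
  v_pos : ∀ s ∈ Icc a b, 0 < v s
  cos_mul_v_lt : ∀ s ∈ Icc a b, cos θ * v s < sin θ * k s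

namespace SphericalFrame

variable {θ a b : ℝ} (F : SphericalFrame E θ a b)

lemma cos_angle_pos (F : SphericalFrame E θ a b) : 0 < cos θ :=
  cos_pos_of_mem_Ioo ⟨by linarith [F.angle_mem.1, pi_pos], F.angle_mem.2⟩

lemma sin_angle_pos (F : SphericalFrame E θ a b) : 0 < sin θ :=
  sin_pos_of_pos_of_lt_pi F.angle_mem.1 (by linarith [F.angle_mem.2, pi_pos])

lemma continuous_x : Continuous F.x :=
  continuous_iff_continuousAt.mpr fun s ↦ (F.hasDerivAt_x s).continuousAt

lemma continuous_T : Continuous F.T :=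
  continuous_iff_continuousAt.mpr fun s ↦ (F.hasDerivAt_T s).continuousAt

lemma norm_x (s : ℝ) : ‖F.x s‖ = 1 := (F.orthonormal s).norm_eq_one 0

lemma norm_T (s : ℝ) : ‖F.T s‖ = 1 := (F.orthonormal s).norm_eq_one 1

lemma norm_n (s : ℝ) : ‖F.n s‖ = 1 := (F.orthonormal s).norm_eq_one 2

lemma inner_x_T (s : ℝ) : ⟪F.x s, F.T s⟫ = 0 :=
  (F.orthonormal s).inner_eq_zero (i := 0) (j := 1) (by decide)

lemma inner_x_n (s : ℝ) : ⟪F.x s, F.n s⟫ = 0 :=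
  (F.orthonormal s).inner_eq_zero (i := 0) (j := 2) (by decide)

lemma inner_T_n (s : ℝ) : ⟪F.T s, F.n s⟫ = 0 :=
  (F.orthonormal s).inner_eq_zero (i := 1) (j := 2) (by decide)

lemma inner_eq_add [Fact (finrank ℝ E = 3)] (s : ℝ) (z w : E) :
    ⟪z, w⟫ = ⟪z, F.x s⟫ * ⟪w, F.x s⟫ + ⟪z, F.T s⟫ * ⟪w, F.T s⟫ + ⟪z, F.n s⟫ * ⟪w, F.n s⟫ := by
  nth_rw 1 [eq_sum_inner_smul_of_orthonormal_vec3 (F.orthonormal s) w]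
  simp only [inner_add_right, real_inner_smul_right]
  ring

/-- The centre of the disk of spherical radius `θ` that is tangent to the curve at `x s` and lies
on the side of `n s`. -/
def center (s : ℝ) : E := cos θ • F.x s + sin θ • F.n s

/-- The height of `x t` above the plane through the origin orthogonal to `center s`. The tangent
disk at `x s` consists of the points of height at least `cos θ`. -/
def height (s t : ℝ) : ℝ := ⟪F.x t, F.center s⟫

lemma inner_center (z : E) (s : ℝ) :
    ⟪z, F.center s⟫ = cos θ * ⟪z, F.x s⟫ + sin θ * ⟪z, F.n s⟫ := by
  simp only [center, inner_add_right, real_inner_smul_right]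

lemma inner_T_center (s : ℝ) : ⟪F.T s, F.center s⟫ = 0 := by
  rw [inner_center, real_inner_comm, inner_x_T, inner_T_n]; ring

lemma height_self (s : ℝ) : F.height s s = cos θ := by
  rw [height, inner_center, inner_x_n, real_inner_self_eq_norm_sq, norm_x]; ring

variable {F} in
lemma height_congr_left {r s : ℝ} (h : F.center r = F.center s) (t : ℝ) :
    F.height r t = F.height s t := by
  rw [height, height, h]

lemma norm_center (s : ℝ) : ‖F.center s‖ = 1 :=
  norm_smul_add_smul_eq_one (F.norm_x s) (F.norm_n s) (F.inner_x_n s) (cos_sq_add_sin_sq θ)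

lemma hasDerivAt_center (s : ℝ) :
    HasDerivAt F.center (-((sin θ * F.k s - cos θ * F.v s) • F.T s)) s := by
  refine (((F.hasDerivAt_x s).const_smul (cos θ)).add
    ((F.hasDerivAt_n s).const_smul (sin θ))).congr_deriv ?_
  module

lemma continuous_center : Continuous F.center :=
  continuous_iff_continuousAt.mpr fun s ↦ (F.hasDerivAt_center s).continuousAt

lemma continuous_height : Continuous fun p : ℝ × ℝ ↦ F.height p.1 p.2 :=
  (F.continuous_x.comp continuous_snd).inner (F.continuous_center.comp continuous_fst)

lemma continuous_height_left (t : ℝ) : Continuous fun s ↦ F.height s t :=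
  F.continuous_height.comp (Continuous.prodMk_left t)

/-- The frame of the curve of centres. A point `x s` lies in the tangent disk at `x t` if and only
if the centre `F.center t` lies in the disk of the same radius centred at `x s`, which is tangent
to the curve of centres at `F.center s`. -/
def dual : SphericalFrame E θ a b where
  x := F.center
  T s := -F.T s
  n s := sin θ • F.x s - cos θ • F.n s
  v s := sin θ * F.k s - cos θ * F.v s
  k s := sin θ * F.v s + cos θ * F.k s
  angle_mem := F.angle_mem
  orthonormal s := by
    have hn : ‖sin θ • F.x s - cos θ • F.n s‖ = 1 := by
      simpa [sub_eq_add_neg] using norm_smul_add_smul_eq_one (F.norm_x s) (F.norm_n s)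
        (F.inner_x_n s) (c := sin θ) (d := -cos θ) (by simp)
    refine orthonormal_vec3_iff.mpr ⟨⟨F.norm_center s, by simp [F.norm_T], hn⟩, ?_, ?_, ?_⟩
    · rw [inner_neg_right, real_inner_comm, inner_T_center, neg_zero]
    · rw [inner_sub_right, real_inner_smul_right, real_inner_smul_right, real_inner_comm,
        inner_center, real_inner_comm (F.n s) (F.center s), inner_center,
        real_inner_comm (F.x s) (F.n s), F.inner_x_n, real_inner_self_eq_norm_sq,
        real_inner_self_eq_norm_sq, F.norm_x, F.norm_n]
      ring
    · rw [inner_neg_left, inner_sub_right, real_inner_smul_right, real_inner_smul_right,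
        real_inner_comm, F.inner_x_T, F.inner_T_n]
      ring
  hasDerivAt_x s := (F.hasDerivAt_center s).congr_deriv (by module)
  hasDerivAt_T s := (F.hasDerivAt_T s).neg.congr_deriv (by
    rw [center]
    linear_combination (norm := module) (sin_sq_add_cos_sq θ) • (F.k s • F.n s - F.v s • F.x s))
  hasDerivAt_n s := (((F.hasDerivAt_x s).const_smul (sin θ)).sub
    ((F.hasDerivAt_n s).const_smul (cos θ))).congr_deriv (by module)
  v_pos s hs := sub_pos.mpr (F.cos_mul_v_lt s hs)
  cos_mul_v_lt s hs := by
    have h : sin θ * (sin θ * F.v s + cos θ * F.k s) - cos θ * (sin θ * F.k s - cos θ * F.v s)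
        = F.v s := by linear_combination F.v s * sin_sq_add_cos_sq θ
    linarith [F.v_pos s hs]

@[simp] lemma dual_x : F.dual.x = F.center := rfl

@[simp] lemma dual_T (s : ℝ) : F.dual.T s = -F.T s := rfl

@[simp] lemma dual_center : F.dual.center = F.x := by
  ext1 s
  simp only [center, dual]
  linear_combination (norm := module) (sin_sq_add_cos_sq θ) • F.x s

@[simp] lemma dual_height (s t : ℝ) : F.dual.height s t = F.height t s := by
  rw [height, height, dual_x, dual_center, real_inner_comm]

/-- The frame of the curve run backwards, with the same tangent disks. -/
def reverse : SphericalFrame E θ (-b) (-a) where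
  x s := F.x (-s)
  T s := -F.T (-s)
  n s := F.n (-s)
  v s := F.v (-s)
  k s := F.k (-s)
  angle_mem := F.angle_mem
  orthonormal s := orthonormal_vec3_iff.mpr
    ⟨⟨F.norm_x _, by rw [norm_neg, F.norm_T], F.norm_n _⟩,
      by rw [inner_neg_right, F.inner_x_T, neg_zero], F.inner_x_n _,
      by rw [inner_neg_left, F.inner_T_n, neg_zero]⟩
  hasDerivAt_x s := ((F.hasDerivAt_x (-s)).scomp s (hasDerivAt_neg s)).congr_deriv (by module)
  hasDerivAt_T s := ((F.hasDerivAt_T (-s)).scomp s (hasDerivAt_neg s)).neg.congr_deriv (by module)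
  hasDerivAt_n s := ((F.hasDerivAt_n (-s)).scomp s (hasDerivAt_neg s)).congr_deriv (by module)
  v_pos s hs := F.v_pos (-s) ⟨by linarith [hs.2], by linarith [hs.1]⟩
  cos_mul_v_lt s hs := F.cos_mul_v_lt (-s) ⟨by linarith [hs.2], by linarith [hs.1]⟩

@[simp] lemma reverse_x (s : ℝ) : F.reverse.x s = F.x (-s) := rfl

@[simp] lemma reverse_T (s : ℝ) : F.reverse.T s = -F.T (-s) := rfl

@[simp] lemma reverse_center (s : ℝ) : F.reverse.center s = F.center (-s) := rfl

@[simp] lemma reverse_height (s t : ℝ) : F.reverse.height s t = F.height (-s) (-t) := rfl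

/-- The same moving frame, considered over a smaller parameter interval. -/
def restrict {a' b' : ℝ} (ha : a ≤ a') (hb : b' ≤ b) : SphericalFrame E θ a' b' where
  __ := F
  v_pos s hs := F.v_pos s (Icc_subset_Icc ha hb hs)
  cos_mul_v_lt s hs := F.cos_mul_v_lt s (Icc_subset_Icc ha hb hs)

lemma hasDerivAt_height_left (s t : ℝ) :
    HasDerivAt (fun s ↦ F.height s t)
      (-((sin θ * F.k s - cos θ * F.v s) * ⟪F.x t, F.T s⟫)) s :=
  ((hasDerivAt_const s (F.x t)).inner ℝ (F.hasDerivAt_center s)).congr_deriv (by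
    rw [inner_zero_left, add_zero, inner_neg_right, real_inner_smul_right])

lemma height_lt_height_left {r s t : ℝ} (hra : a ≤ r) (hrs : r < s) (hsb : s ≤ b)
    (h : ∀ u ∈ Ioo r s, ⟪F.x t, F.T u⟫ < 0) : F.height r t < F.height s t :=
  strictMonoOn_of_deriv_pos (convex_Icc r s) (F.continuous_height_left t).continuousOn
    (fun u hu ↦ by
      rw [interior_Icc] at hu
      rw [(F.hasDerivAt_height_left u t).deriv, Left.neg_pos_iff]
      exact mul_neg_of_pos_of_neg
        (F.dual.v_pos u ⟨hra.trans hu.1.le, hu.2.le.trans hsb⟩) (h u hu))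
    (left_mem_Icc.mpr hrs.le) (right_mem_Icc.mpr hrs.le) hrs

lemma height_lt_height_right {r t s : ℝ} (hra : a ≤ r) (hrt : r < t) (htb : t ≤ b)
    (h : ∀ u ∈ Ioo r t, 0 < ⟪F.T u, F.center s⟫) : F.height s r < F.height s t := by
  simpa using F.dual.height_lt_height_left (t := s) hra hrt htb
    (fun u hu ↦ by simpa [real_inner_comm] using h u hu)

lemma inner_T_nonpos_of_le_right {s q : ℝ} (hs : s ∈ Ico a b) (h : F.height s q = cos θ)
    (hmin : ∀ᶠ r in 𝓝[>] s, cos θ ≤ F.height r q) : ⟪F.x q, F.T s⟫ ≤ 0 := by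
  have hslope := hasDerivWithinAt_iff_tendsto_slope' (self_notMem_Ioi (a := s)) |>.mp
    (F.hasDerivAt_height_left s q).hasDerivWithinAt
  have hnonneg := ge_of_tendsto hslope (by
    filter_upwards [hmin, self_mem_nhdsWithin] with r hr hsr
    rw [slope_def_field, h]
    exact div_nonneg (sub_nonneg.mpr hr) (sub_pos.mpr hsr).le)
  exact nonpos_of_mul_nonpos_right (neg_nonneg.mp hnonneg)
    (F.dual.v_pos s (Ico_subset_Icc_self hs))

lemma inner_T_center_nonneg_of_le_right {p s : ℝ} (hs : s ∈ Ico a b) (h : F.height p s = cos θ)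
    (hmin : ∀ᶠ r in 𝓝[>] s, cos θ ≤ F.height p r) : 0 ≤ ⟪F.T s, F.center p⟫ := by
  have hT := F.dual.inner_T_nonpos_of_le_right (q := p) hs (by simpa using h) (by simpa using hmin)
  rwa [dual_x, dual_T, inner_neg_right, real_inner_comm, neg_nonpos] at hT

section Contact

variable [Fact (finrank ℝ E = 3)]

/- The circle of radius `θ` around `center s` and the great circle through `x s` and `center s`
meet in `x s` and in its antipode on that circle, at spherical distance `2 * θ`. -/
lemma inner_x_and_n_of_inner_T_eq_zero {s t : ℝ} (h : F.height s t = cos θ)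
    (hT : ⟪F.x t, F.T s⟫ = 0) (hne : F.x t ≠ F.x s) :
    ⟪F.x t, F.x s⟫ = cos (2 * θ) ∧ ⟪F.x t, F.n s⟫ = sin (2 * θ) := by
  have hunit := F.inner_eq_add s (F.x t) (F.x t)
  rw [real_inner_self_eq_norm_sq, F.norm_x, hT] at hunit
  rw [height, inner_center] at h
  have hp : ⟪F.x t, F.x s⟫ ≠ 1 := fun h ↦
    hne (eq_of_norm_eq_one_of_one_le_inner (F.norm_x t) (F.norm_x s) h.ge)
  have hsc := sin_sq_add_cos_sq θ
  set p := ⟪F.x t, F.x s⟫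
  set q := ⟪F.x t, F.n s⟫
  have hfactor : (p - 1) * (p - cos (2 * θ)) = 0 := by
    rw [cos_two_mul]
    linear_combination (-sin θ ^ 2) * hunit + (1 - p ^ 2) * hsc - (sin θ * q + cos θ * (1 - p)) * h
  have hpc : p = cos (2 * θ) := by
    linear_combination (mul_eq_zero.mp hfactor).resolve_left (sub_ne_zero.mpr hp)
  refine ⟨hpc, mul_left_cancel₀ F.sin_angle_pos.ne' ?_⟩
  rw [sin_two_mul]
  rw [cos_two_mul] at hpc
  linear_combination h - cos θ * hpc - 2 * cos θ * hsc

lemma inner_T_pos_of_le_left {s t : ℝ} (hs : s ∈ Ioc a b) (h : F.height s t = cos θ)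
    (hmin : ∀ᶠ r in 𝓝[<] s, cos θ ≤ F.height r t) (hne : F.x t ≠ F.x s) :
    0 < ⟪F.x t, F.T s⟫ := by
  by_contra! hT
  have hderiv : HasDerivAt (fun r ↦ ⟪F.x t, F.T r⟫)
      (F.k s * ⟪F.x t, F.n s⟫ - F.v s * ⟪F.x t, F.x s⟫) s :=
    ((hasDerivAt_const s (F.x t)).inner ℝ (F.hasDerivAt_T s)).congr_deriv (by
      rw [inner_zero_left, add_zero, inner_sub_right, real_inner_smul_right, real_inner_smul_right])
  have hneg : ∀ᶠ r in 𝓝[<] s, ⟪F.x t, F.T r⟫ < 0 := by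
    rcases hT.lt_or_eq with hT | hT
    · exact nhdsWithin_le_nhds (hderiv.continuousAt.eventually_lt_const hT)
    · obtain ⟨hp, hq⟩ := F.inner_x_and_n_of_inner_T_eq_zero h hT hne
      have hpos : 0 < deriv (fun r ↦ ⟪F.x t, F.T r⟫) s := by
        rw [hderiv.deriv, hp, hq, sin_two_mul, cos_two_mul]
        nlinarith [F.cos_mul_v_lt s (Ioc_subset_Icc_self hs), F.cos_angle_pos,
          F.v_pos s (Ioc_subset_Icc_self hs)]
      filter_upwards [nhdsWithin_le_nhds (eventually_nhdsWithin_sign_eq_of_deriv_pos hpos hT),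
        self_mem_nhdsWithin] with r hr hrs
      rwa [sign_neg (sub_neg.mpr hrs), sign_eq_neg_one_iff] at hr
  obtain ⟨l, hls, hl⟩ := mem_nhdsLT_iff_exists_Ioo_subset.mp (hneg.and hmin)
  obtain ⟨r, hlr, hrs⟩ := exists_between (max_lt hls hs.1)
  obtain ⟨hlr, har⟩ := max_lt_iff.mp hlr
  have hlt : F.height r t < F.height s t :=
    F.height_lt_height_left har.le hrs hs.2 fun u hu ↦ (hl ⟨hlr.trans hu.1, hu.2⟩).1
  exact (h ▸ hlt).not_ge (hl ⟨hlr, hrs⟩).2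

lemma eq_of_isLocalMin_left {s t : ℝ} (hs : s ∈ Ioo a b) (h : F.height s t = cos θ)
    (hmin : ∀ᶠ r in 𝓝 s, cos θ ≤ F.height r t) : F.x t = F.x s := by
  by_contra hne
  have hpos := F.inner_T_pos_of_le_left (Ioo_subset_Ioc_self hs) h
    (nhdsWithin_le_nhds hmin) hne
  have hmin' : ∀ᶠ r in 𝓝[<] (-s), cos θ ≤ F.height (-r) t :=
    ((continuous_neg.tendsto' (-s) s (neg_neg s)).eventually hmin).filter_mono nhdsWithin_le_nhds
  have hneg := F.reverse.inner_T_pos_of_le_left (s := -s) (t := -t)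
    ⟨neg_lt_neg hs.2, neg_le_neg hs.1.le⟩ (by simpa using h) (by simpa using hmin')
    (by simpa using hne)
  simp only [reverse_x, reverse_T, neg_neg, inner_neg_right] at hneg
  linarith

lemma center_eq_of_isLocalMin_right {s t : ℝ} (ht : t ∈ Ioo a b) (h : F.height s t = cos θ)
    (hmin : ∀ᶠ r in 𝓝 t, cos θ ≤ F.height s r) : F.center s = F.center t :=
  F.dual.eq_of_isLocalMin_left ht (by simpa using h) (by simpa using hmin)

/- If the circles of radius `θ` around `o` and `center s` cross at `x s`, the part of the second one
behind `x s` lies outside the disk around `o`. -/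
lemma center_eq_or_x_eq {s : ℝ} {o z : E} (ho : ‖o‖ = 1) (hz : ‖z‖ = 1)
    (hxo : ⟪F.x s, o⟫ = cos θ) (hTo : 0 ≤ ⟪F.T s, o⟫) (hzs : ⟪z, F.center s⟫ = cos θ)
    (hzT : ⟪z, F.T s⟫ ≤ 0) (hzo : cos θ ≤ ⟪z, o⟫) : F.center s = o ∨ F.x s = z := by
  refine or_iff_not_imp_right.mpr fun hne ↦ ?_
  have hpo := F.inner_eq_add s o o
  have hpz := F.inner_eq_add s z z
  have hpzo := F.inner_eq_add s z o
  rw [real_inner_comm] at hxo hTo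
  rw [inner_center] at hzs
  rw [real_inner_self_eq_norm_sq, ho, hxo] at hpo
  rw [real_inner_self_eq_norm_sq, hz] at hpz
  rw [hxo] at hpzo
  have hc := F.cos_angle_pos
  have hd := F.sin_angle_pos
  have hcd := sin_sq_add_cos_sq θ
  have hp : ⟪z, F.x s⟫ < 1 := lt_of_not_ge fun h ↦
    hne (eq_of_norm_eq_one_of_one_le_inner hz (F.norm_x s) h).symm
  have hq : 0 < ⟪z, F.n s⟫ := by
    refine pos_of_mul_pos_right (a := sin θ) ?_ hd.le
    linarith [mul_pos hc (sub_pos.mpr hp)]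
  have hTT : ⟪z, F.T s⟫ * ⟪o, F.T s⟫ ≤ 0 := mul_nonpos_of_nonpos_of_nonneg hzT hTo
  have hn : sin θ ≤ ⟪o, F.n s⟫ := by
    refine le_of_mul_le_mul_left ?_ hq
    linarith
  refine eq_of_norm_eq_one_of_one_le_inner (F.norm_center s) ho ?_
  rw [real_inner_comm, inner_center, hxo]
  nlinarith [mul_le_mul_of_nonneg_left hn hd.le]

lemma center_eq_or_x_eq_of_le_right {p s q : ℝ} (hs : s ∈ Ico a b) (hps : F.height p s = cos θ)
    (hsq : F.height s q = cos θ) (hp : ∀ᶠ r in 𝓝[>] s, cos θ ≤ F.height p r)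
    (hq : ∀ᶠ r in 𝓝[>] s, cos θ ≤ F.height r q) (hpq : cos θ ≤ F.height p q) :
    F.center s = F.center p ∨ F.x s = F.x q :=
  F.center_eq_or_x_eq (F.norm_center p) (F.norm_x q) hps
    (F.inner_T_center_nonneg_of_le_right hs hps hp) hsq (F.inner_T_nonpos_of_le_right hs hsq hq) hpq

lemma center_eq_or_x_eq_of_le_left {p s q : ℝ} (hs : s ∈ Ioc a b) (hps : F.height p s = cos θ)
    (hsq : F.height s q = cos θ) (hp : ∀ᶠ r in 𝓝[<] s, cos θ ≤ F.height p r)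
    (hq : ∀ᶠ r in 𝓝[<] s, cos θ ≤ F.height r q) (hpq : cos θ ≤ F.height p q) :
    F.center s = F.center p ∨ F.x s = F.x q := by
  have hneg : Tendsto (fun r : ℝ ↦ -r) (𝓝[>] (-s)) (𝓝[<] s) := tendsto_neg_nhdsGT_neg
  simpa using F.reverse.center_eq_or_x_eq_of_le_right (p := -p) (s := -s) (q := -q)
    ⟨neg_le_neg hs.2, neg_lt_neg hs.1⟩ (by simpa using hps) (by simpa using hsq)
    (by simpa using hneg.eventually hp) (by simpa using hneg.eventually hq) (by simpa using hpq)

end Contact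

section Diagonal

lemma cos_lt_height_of_forall_inner_T_pos {p q : ℝ} (hap : a ≤ p) (hpq : p < q) (hqb : q ≤ b)
    (h : ∀ u ∈ Icc p q, ∀ w ∈ Icc p q, 0 < ⟪F.T u, F.T w⟫) : cos θ < F.height p q := by
  rw [← F.height_self p]
  refine F.height_lt_height_right hap hpq hqb fun t ht ↦ ?_
  have hanti : StrictAntiOn (fun u ↦ ⟪F.T t, F.center u⟫) (Icc p t) := by
    refine strictAntiOn_of_deriv_neg (convex_Icc p t)
      (continuous_const.inner F.continuous_center).continuousOn fun u hu ↦ ?_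
    rw [interior_Icc] at hu
    have hderiv := (hasDerivAt_const u (F.T t)).inner ℝ (F.hasDerivAt_center u)
    rw [hderiv.deriv, inner_zero_left, add_zero, inner_neg_right, real_inner_smul_right,
      Left.neg_neg_iff]
    exact mul_pos (F.dual.v_pos u ⟨by linarith [hu.1], by linarith [hu.2, ht.2]⟩)
      (h t (Ioo_subset_Icc_self ht) u ⟨hu.1.le, (hu.2.trans ht.2).le⟩)
  simpa [F.inner_T_center] using
    hanti (left_mem_Icc.mpr ht.1.le) (right_mem_Icc.mpr ht.1.le) ht.1

lemma eventually_cos_lt_height (s : ℝ) :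
    ∀ᶠ p : ℝ × ℝ in 𝓝 (s, s), a ≤ p.1 → p.1 < p.2 → p.2 ≤ b → cos θ < F.height p.1 p.2 := by
  have hT : ∀ᶠ p : ℝ × ℝ in 𝓝 (s, s), 0 < ⟪F.T p.1, F.T p.2⟫ :=
    ((F.continuous_T.comp continuous_fst).inner
      (F.continuous_T.comp continuous_snd)).continuousAt.eventually_const_lt (by simp [F.norm_T])
  rw [nhds_prod_eq, eventually_prod_self_iff'] at *
  obtain ⟨U, hU, hUT⟩ := hT
  obtain ⟨l, r, hs, hlr⟩ := mem_nhds_iff_exists_Ioo_subset.mp hU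
  refine ⟨Ioo l r, Ioo_mem_nhds hs.1 hs.2, fun p hp q hq hap hpq hqb ↦ ?_⟩
  have hIcc : Icc p q ⊆ U := (Icc_subset_Ioo hp.1 hq.2).trans hlr
  exact F.cos_lt_height_of_forall_inner_T_pos hap hpq hqb
    fun u hu w hw ↦ hUT u (hIcc hu) w (hIcc hw)

lemma isCompact_setOf_height_le :
    IsCompact {p : ℝ × ℝ | a ≤ p.1 ∧ p.1 < p.2 ∧ p.2 ≤ b ∧ F.height p.1 p.2 ≤ cos θ} := by
  set O : Set (ℝ × ℝ) := {p | ∀ᶠ q : ℝ × ℝ in 𝓝 p,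
    a ≤ q.1 → q.1 < q.2 → q.2 ≤ b → cos θ < F.height q.1 q.2}
  have hclosed : IsClosed ({p : ℝ × ℝ | p.1 ≤ p.2 ∧ F.height p.1 p.2 ≤ cos θ} ∩ Oᶜ) :=
    ((isClosed_le continuous_fst continuous_snd).inter
      (isClosed_le F.continuous_height continuous_const)).inter
      isOpen_setOfPred_eventually_nhds.isClosed_compl
  convert (isCompact_Icc (a := (a, a)) (b := (b, b))).inter_right hclosed using 1
  ext p
  constructor
  · rintro ⟨ha, hlt, hb, hp⟩
    exact ⟨⟨⟨ha, ha.trans hlt.le⟩, hlt.le.trans hb, hb⟩, ⟨hlt.le, hp⟩,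
      fun hO ↦ (hO.self_of_nhds ha hlt hb).not_ge hp⟩
  · rintro ⟨⟨⟨ha, -⟩, -, hb⟩, ⟨hle, hp⟩, hO⟩
    refine ⟨ha, hle.lt_of_ne fun heq ↦ hO ?_, hb, hp⟩
    rw [← Prod.mk.eta (p := p), ← heq]
    exact F.eventually_cos_lt_height p.1

end Diagonal

/-- Among the parameters `s < m`, the last one whose tangent disk touches or misses part of the
later arc is `α`, and `τ` is the parameter of a later point on its boundary circle. -/
structure IsLastContact (m α τ : ℝ) : Prop where
  le_left : a ≤ α
  left_lt : α < m
  lt : α < τ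
  right_le : τ ≤ b
  height_eq : F.height α τ = cos θ
  cos_lt_height : ∀ s t, α < s → s < m → s < t → t ≤ b → cos θ < F.height s t

lemma exists_isLastContact {m : ℝ}
    (hm : ∀ᶠ s in 𝓝[<] m, ∀ t, a ≤ s → s < t → t ≤ b → cos θ < F.height s t)
    (hbad : ∃ s t, a ≤ s ∧ s < m ∧ s < t ∧ t ≤ b ∧ F.height s t ≤ cos θ) :
    ∃ α τ, F.IsLastContact m α τ := by
  obtain ⟨m₀, hm₀, hstrict⟩ := mem_nhdsLT_iff_exists_Ioo_subset.mp hm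
  obtain ⟨m₁, hm₀₁, hm₁⟩ := exists_between (mem_Iio.mp hm₀)
  have hbad_le : ∀ s t, a ≤ s → s < m → s < t → t ≤ b → F.height s t ≤ cos θ → s ≤ m₁ :=
    fun s t ha hsm hst htb hle ↦ not_lt.mp fun hs ↦
      (hstrict ⟨hm₀₁.trans hs, hsm⟩ t ha hst htb).not_ge hle
  have hK := F.isCompact_setOf_height_le.inter_right (isClosed_Iic.preimage continuous_fst :
    IsClosed {p : ℝ × ℝ | p.1 ≤ m₁})
  obtain ⟨s₀, t₀, ha, hsm, hst, htb, hle⟩ := hbad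
  obtain ⟨⟨α, τ⟩, ⟨⟨haα, hατ, hτb, hατle⟩, hαm⟩, hmax⟩ := hK.exists_isMaxOn
    ⟨(s₀, t₀), ⟨ha, hst, htb, hle⟩, hbad_le s₀ t₀ ha hsm hst htb hle⟩ continuous_fst.continuousOn
  have hforward : ∀ s t, α < s → s < m → s < t → t ≤ b → cos θ < F.height s t := by
    intro s t hαs hsm hst htb
    by_contra! hle
    have has := haα.trans hαs.le
    have hs := isMaxOn_iff.mp hmax (s, t) ⟨⟨has, hst, htb, hle⟩, hbad_le s t has hsm hst htb hle⟩
    exact hs.not_gt hαs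
  have hαlt : α < m := hαm.trans_lt hm₁
  refine ⟨α, τ, haα, hαlt, hατ, hτb, hατle.antisymm ?_, hforward⟩
  refine ge_of_tendsto ((F.continuous_height_left τ).continuousWithinAt (s := Ioi α)) ?_
  filter_upwards [Ioo_mem_nhdsGT (lt_min hαlt hατ)] with s hs
  obtain ⟨hsm, hsτ⟩ := lt_min_iff.mp hs.2
  exact (hforward s τ hs.1 hsm hsτ hτb).le

lemma exists_isLastContact_of_height_le {s t : ℝ} (has : a ≤ s) (hst : s < t) (htb : t ≤ b)
    (h : F.height s t ≤ cos θ) : ∃ α τ, F.IsLastContact b α τ := by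
  refine F.exists_isLastContact ?_ ⟨s, t, has, hst.trans_le htb, hst, htb, h⟩
  have hdiag := F.eventually_cos_lt_height b
  rw [nhds_prod_eq, eventually_prod_self_iff'] at hdiag
  obtain ⟨U, hU, hUb⟩ := hdiag
  obtain ⟨l, r, hb, hlr⟩ := mem_nhds_iff_exists_Ioo_subset.mp hU
  filter_upwards [Ioo_mem_nhdsLT hb.1] with s hs t has hst htb
  exact hUb s (hlr ⟨hs.1, hs.2.trans hb.2⟩) t
    (hlr ⟨hs.1.trans hst, htb.trans_lt hb.2⟩) has hst htb

namespace IsLastContact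

variable {F} {m α τ : ℝ}

lemma cos_le_height (h : F.IsLastContact m α τ) {t : ℝ} (hαt : α ≤ t) (htb : t ≤ b) :
    cos θ ≤ F.height α t := by
  rcases hαt.eq_or_lt with rfl | hαt
  · exact (F.height_self α).ge
  refine ge_of_tendsto ((F.continuous_height_left t).continuousWithinAt (s := Ioi α)) ?_
  filter_upwards [Ioo_mem_nhdsGT (lt_min h.left_lt hαt)] with s hs
  obtain ⟨hsm, hst⟩ := lt_min_iff.mp hs.2
  exact (h.cos_lt_height s t hs.1 hsm hst htb).le

variable [Fact (finrank ℝ E = 3)]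

lemma center_eq (h : F.IsLastContact m α τ) {t : ℝ} (ht : t ∈ Ioo α b)
    (hheight : F.height α t = cos θ) : F.center α = F.center t :=
  F.center_eq_of_isLocalMin_right ⟨h.le_left.trans_lt ht.1, ht.2⟩ hheight <| by
    filter_upwards [Ioo_mem_nhds ht.1 ht.2] with r hr using h.cos_le_height hr.1.le hr.2.le

lemma cos_lt_height_of_lt (h : F.IsLastContact b α τ) {t : ℝ} (hαt : α < t) (htτ : t < τ) :
    cos θ < F.height α t := by
  have htb := htτ.trans_le h.right_le
  refine (h.cos_le_height hαt.le htb.le).lt_of_ne' fun heq ↦ ?_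
  have hlt := h.cos_lt_height t τ hαt htb htτ h.right_le
  exact hlt.ne' ((height_congr_left (h.center_eq ⟨hαt, htb⟩ heq) τ).symm.trans h.height_eq)

end IsLastContact

section Arc

variable {F} [Fact (finrank ℝ E = 3)]

lemma center_eq_of_height_le_backward (hab : a < b)
    (hforward : ∀ s t, a < s → s < t → t ≤ b → cos θ < F.height s t)
    (hcontact : F.height a b = cos θ) (hne : F.x a ≠ F.x b)
    {s t : ℝ} (hat : a ≤ t) (hts : t < s) (hsb : s ≤ b) (h : F.height s t ≤ cos θ) :
    s = b ∧ F.center a = F.center b := by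
  obtain ⟨β', t', hlast⟩ := F.reverse.exists_isLastContact_of_height_le (s := -s) (t := -t)
    (neg_le_neg hsb) (neg_lt_neg hts) (neg_le_neg hat) (by simpa using h)
  obtain ⟨β, rfl⟩ := neg_surjective β'
  obtain ⟨t₁, rfl⟩ := neg_surjective t'
  have hβb : β ≤ b := neg_le_neg_iff.mp hlast.le_left
  have ht₁β : t₁ < β := neg_lt_neg_iff.mp hlast.lt
  have haβ : a < β := neg_lt_neg_iff.mp hlast.left_lt
  have ht₁ : t₁ = a := by
    refine (neg_le_neg_iff.mp hlast.right_le).eq_of_not_lt' fun hat₁ ↦ ?_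
    have hcenter := hlast.center_eq ⟨hlast.lt, neg_lt_neg hat₁⟩ hlast.height_eq
    simp only [reverse_center, neg_neg] at hcenter
    exact (hforward t₁ β hat₁ ht₁β hβb).ne'
      ((height_congr_left hcenter β).symm.trans (F.height_self β))
  subst ht₁
  have hβ_le : ∀ r, t₁ ≤ r → r ≤ β → cos θ ≤ F.height β r := fun r har hrβ ↦ by
    simpa using hlast.cos_le_height (neg_le_neg hrβ) (neg_le_neg har)
  have hcenter : F.center t₁ = F.center β := by
    refine (F.center_eq_or_x_eq_of_le_right ⟨le_rfl, hab⟩ (by simpa using hlast.height_eq)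
      hcontact ?_ ?_ ?_).resolve_right hne
    · filter_upwards [Ioo_mem_nhdsGT haβ] with r hr using hβ_le r hr.1.le hr.2.le
    · filter_upwards [Ioo_mem_nhdsGT hab] with r hr using (hforward r b hr.1 hr.2 le_rfl).le
    · rcases hβb.eq_or_lt with rfl | hβb
      · exact (F.height_self β).ge
      · exact (hforward β b haβ hβb le_rfl).le
  have hβ : β = b := hβb.eq_of_not_lt fun hβb ↦ (hforward β b haβ hβb le_rfl).ne'
    ((height_congr_left hcenter b).symm.trans hcontact)
  subst hβ
  refine ⟨hsb.eq_of_not_lt fun hsβ ↦ ?_, hcenter⟩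
  exact (hlast.cos_lt_height (-s) (-t) (neg_lt_neg hsβ) (neg_lt_neg (hat.trans_lt hts))
    (neg_lt_neg hts) (neg_le_neg hat)).not_ge (by simpa using h)

lemma cos_le_height_of_backward {α : ℝ} (hα : α ∈ Ioo a b) (hinj : InjOn F.x (Ioc a b))
    (hcontact : F.height α b = cos θ) (hle : ∀ t ∈ Ioo α b, cos θ ≤ F.height α t)
    (hback : ∀ t s, α ≤ t → t < s → s ≤ b → cos θ < F.height s t) {t₀ : ℝ} (ht₀ : t₀ ∈ Ioo a b) :
    cos θ ≤ F.height b t₀ := by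
  by_contra! hlt
  let G := (F.restrict ht₀.1.le le_rfl).dual
  have hG : ∀ s t, G.height s t = F.height t s := (F.restrict ht₀.1.le le_rfl).dual_height
  have hGc : G.center = F.x := (F.restrict ht₀.1.le le_rfl).dual_center
  obtain ⟨t, s, hlast⟩ :=
    G.exists_isLastContact_of_height_le le_rfl ht₀.2 le_rfl ((hG _ _).trans_le hlt.le)
  have hat : a < t := ht₀.1.trans_le hlast.le_left
  have hs : s = b := hlast.right_le.eq_of_not_lt fun hsb ↦
    hlast.lt.ne (hinj ⟨hat, hlast.left_lt.le⟩ ⟨hat.trans hlast.lt, hsb.le⟩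
      (by simpa only [hGc] using hlast.center_eq ⟨hlast.lt, hsb⟩ hlast.height_eq))
  subst hs
  have hheight : F.height s t = cos θ := (hG t s).symm.trans hlast.height_eq
  have htα : t < α := not_le.mp fun hαt ↦ (hback t s hαt hlast.lt le_rfl).ne' hheight
  have hle' : ∀ r, t ≤ r → r ≤ s → cos θ ≤ F.height r t := fun r htr hrs ↦
    (hlast.cos_le_height htr hrs).trans_eq (hG t r)
  rcases F.center_eq_or_x_eq_of_le_left ⟨hα.1.trans hα.2, le_rfl⟩ hcontact hheight
    (by filter_upwards [Ioo_mem_nhdsLT hα.2] with r hr using hle r hr)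
    (by filter_upwards [Ioo_mem_nhdsLT hlast.lt] with r hr using hle' r hr.1.le hr.2.le)
    (hle' α htα.le hα.2.le) with hcenter | hx
  · exact (hback α s le_rfl hα.2 le_rfl).ne'
      ((height_congr_left hcenter α).trans (F.height_self α))
  · exact hlast.lt.ne' (hinj ⟨hα.1.trans hα.2, le_rfl⟩ ⟨hat, hlast.left_lt.le⟩ hx)

lemma eventually_cos_lt_height_of_center_eq {α : ℝ} (hα : α ∈ Ioo a b)
    (hcenter : F.center α = F.center b) (hne : F.x α ≠ F.x b)
    (hback : ∀ t s, α ≤ t → t < s → s < b → cos θ < F.height s t) :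
    ∀ᶠ p : ℝ × ℝ in 𝓝 (α, b), a ≤ p.1 → p.1 < α → p.2 ≤ b → cos θ < F.height p.2 p.1 := by
  have hT : 0 < ⟪F.x α, F.T b⟫ := by
    refine F.inner_T_pos_of_le_left ⟨hα.1.trans hα.2, le_rfl⟩ ?_ ?_ hne
    · exact (height_congr_left hcenter α).symm.trans (F.height_self α)
    · filter_upwards [Ioo_mem_nhdsLT hα.2] with r hr using (hback α r le_rfl hr.1 hr.2).le
  have hTnhds : ∀ᶠ p : ℝ × ℝ in 𝓝 (α, b), 0 < ⟪F.x p.1, F.T p.2⟫ :=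
    ((F.continuous_x.comp continuous_fst).inner
      (F.continuous_T.comp continuous_snd)).continuousAt.eventually_const_lt hT
  have hpast : ∀ᶠ t in 𝓝 α, a ≤ t → t < α → cos θ < F.height b t := by
    filter_upwards [(Continuous.prodMk_left α).continuousAt.eventually
      (F.dual.eventually_cos_lt_height α)] with t ht hat htα
    rw [← height_congr_left hcenter]
    simpa using ht hat htα hα.2.le
  obtain ⟨U, hU, V, hV, hUV⟩ := mem_nhds_prod_iff.mp hTnhds
  obtain ⟨l, r, hb, hlr⟩ := mem_nhds_iff_exists_Ioo_subset.mp hV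
  filter_upwards [prod_mem_nhds (inter_mem hU hpast)
    (Ioo_mem_nhds (max_lt hb.1 (hα.1.trans hα.2)) hb.2)]
  rintro ⟨t, s⟩ ⟨⟨htU, hpast⟩, hs, -⟩ hat htα hsb
  obtain ⟨hls, has⟩ := max_lt_iff.mp hs
  have hlt : cos θ < F.height b t := hpast hat htα
  rcases hsb.eq_or_lt with rfl | hsb
  · exact hlt
  · have hdecr := F.reverse.height_lt_height_left (r := -b) (s := -s) (t := -t) le_rfl
      (neg_lt_neg hsb) (neg_le_neg has.le) fun u hu ↦ by
        rw [reverse_x, reverse_T, neg_neg, inner_neg_right, Left.neg_neg_iff]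
        exact hUV (mk_mem_prod htU (hlr ⟨by linarith [hu.2], by linarith [hb.2, hu.1]⟩))
    exact hlt.trans (by simpa using hdecr)

lemma eventually_forall_cos_lt_height_of_center_eq {α : ℝ} (hα : α ∈ Ioo a b)
    (hcenter : F.center α = F.center b) (hne : F.x α ≠ F.x b)
    (hback : ∀ t s, α ≤ t → t < s → s < b → cos θ < F.height s t) :
    ∀ᶠ t in 𝓝[<] α, ∀ s, a ≤ t → t < s → s ≤ b → cos θ < F.height s t := by
  have hnear : ∀ s₀ ∈ Icc a b, ∀ᶠ p : ℝ × ℝ in 𝓝 (α, s₀),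
      a ≤ p.1 → p.1 < α → p.1 < p.2 → p.2 ≤ b → cos θ < F.height p.2 p.1 := by
    intro s₀ hs₀
    rcases lt_trichotomy s₀ α with hlt | rfl | hgt
    · filter_upwards [(isOpen_lt continuous_snd continuous_fst).mem_nhds hlt] with p hp
      exact fun _ _ hp' ↦ absurd hp' (not_lt.mpr (le_of_lt hp))
    · filter_upwards [F.dual.eventually_cos_lt_height s₀] with p hp hat _ hts hsb
      simpa using hp hat hts hsb
    rcases hs₀.2.eq_or_lt with rfl | hlt
    · filter_upwards [F.eventually_cos_lt_height_of_center_eq hα hcenter hne hback]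
        with p hp hat htα _ hsb using hp hat htα hsb
    · have hopen := (F.dual.continuous_height.tendsto (α, s₀)).eventually_const_lt
        (show cos θ < F.dual.height α s₀ by simpa using hback α s₀ le_rfl hgt hlt)
      filter_upwards [hopen] with p hp _ _ _ _ using by simpa using hp
  have huniform : ∀ᶠ t in 𝓝 α, ∀ s ∈ Icc a b,
      a ≤ t → t < α → t < s → s ≤ b → cos θ < F.height s t :=
    isCompact_Icc.eventually_forall_of_forall_eventually hnear
  filter_upwards [nhdsWithin_le_nhds huniform, self_mem_nhdsWithin] with t ht htα s hat hts hsb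
  exact ht s ⟨hat.trans hts.le, hsb⟩ hat htα hts hsb

lemma cos_lt_height_of_center_eq {α : ℝ} (hα : α < b)
    (hcenter : F.center α = F.center b) (hinj : InjOn F.x (Ico a b)) (hne : F.x α ≠ F.x b)
    (hback : ∀ t s, α ≤ t → t < s → s < b → cos θ < F.height s t) {t : ℝ} (hat : a ≤ t)
    (htα : t < α) : cos θ < F.height α t := by
  by_contra! hle
  let G := (F.restrict hat le_rfl).dual
  have hG : ∀ s t, G.height s t = F.height t s := (F.restrict hat le_rfl).dual_height
  have hGc : G.center = F.x := (F.restrict hat le_rfl).dual_center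
  obtain ⟨t₁, s₁, hlast⟩ := G.exists_isLastContact (m := α)
    (by
      simp only [hG]
      exact (F.restrict hat le_rfl).eventually_forall_cos_lt_height_of_center_eq
        ⟨htα, hα⟩ hcenter hne hback)
    ⟨t, α, le_rfl, htα, htα, hα.le, (hG t α).trans_le hle⟩
  have hat₁ := hat.trans hlast.le_left
  have hno_contact : ∀ s ∈ Ioo t₁ b, F.height s t₁ ≠ cos θ := fun s hs heq ↦
    hs.1.ne (hinj ⟨hat₁, hs.1.trans hs.2⟩ ⟨hat₁.trans hs.1.le, hs.2⟩
      (by simpa only [hGc] using hlast.center_eq hs ((hG t₁ s).trans heq)))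
  have hheight : F.height s₁ t₁ = cos θ := (hG t₁ s₁).symm.trans hlast.height_eq
  rcases hlast.right_le.eq_or_lt with rfl | hs₁
  · exact hno_contact α ⟨hlast.left_lt, hα⟩ ((height_congr_left hcenter t₁).trans hheight)
  · exact hno_contact s₁ ⟨hlast.lt, hs₁⟩ hheight

end Arc

section Loop

lemma exists_height_lt_of_inner_T_neg (hab : a < b) (hclosed : F.x a = F.x b)
    (hT : ⟪F.T a, F.n b⟫ < 0) : ∃ t ∈ Ioo a b, F.height b t < cos θ := by
  by_contra! hle
  have hnonneg := F.inner_T_center_nonneg_of_le_right (p := b) ⟨le_rfl, hab⟩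
    (by rw [height, hclosed]; exact F.height_self b)
    (by filter_upwards [Ioo_mem_nhdsGT hab] with r hr using hle r hr)
  rw [inner_center, ← hclosed, real_inner_comm, F.inner_x_T, mul_zero, zero_add] at hnonneg
  exact (mul_neg_of_pos_of_neg F.sin_angle_pos hT).not_ge hnonneg

variable {F} [Fact (finrank ℝ E = 3)]

lemma IsLastContact.center_eq_and_backward {α τ : ℝ} (h : F.IsLastContact b α τ) (hα : a < α)
    (hinj : InjOn F.x (Ioc a b)) (hexit : ∃ t ∈ Ioo a b, F.height b t < cos θ) :
    F.center α = F.center τ ∧ ∀ t s, α ≤ t → t < s → s < τ → cos θ < F.height s t := by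
  have hne : F.x α ≠ F.x τ :=
    fun hx ↦ h.lt.ne (hinj ⟨hα, h.left_lt.le⟩ ⟨hα.trans h.lt, h.right_le⟩ hx)
  have hbad : ∀ t s, α ≤ t → t < s → s ≤ τ → F.height s t ≤ cos θ →
      s = τ ∧ F.center α = F.center τ := fun t s hαt hts hsτ hle ↦
    (F.restrict hα.le h.right_le).center_eq_of_height_le_backward h.lt
      (fun s t hs hst htτ ↦ h.cos_lt_height s t hs
        (hst.trans_le (htτ.trans h.right_le)) hst (htτ.trans h.right_le))
      h.height_eq hne hαt hts hsτ hle
  refine ⟨?_, fun t s hαt hts hsτ ↦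
    not_le.mp fun hle ↦ hsτ.ne (hbad t s hαt hts hsτ.le hle).1⟩
  rcases h.right_le.lt_or_eq with hτb | rfl
  · exact h.center_eq ⟨h.lt, hτb⟩ h.height_eq
  · by_contra hcenter
    obtain ⟨t, ht, hlt⟩ := hexit
    exact hlt.not_ge (F.cos_le_height_of_backward ⟨hα, h.lt⟩ hinj h.height_eq
      (fun t ht ↦ (h.cos_lt_height_of_lt ht.1 ht.2).le)
      (fun t s hαt hts hsτ ↦ not_le.mp fun hle ↦ hcenter (hbad t s hαt hts hsτ hle).2) ht)

theorem exists_bitangent_center (hab : a < b) (hinj : InjOn F.x (Ico a b))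
    (hclosed : F.x a = F.x b) (hTa : ⟪F.T a, F.n b⟫ < 0) (hTb : 0 < ⟪F.T b, F.n a⟫) :
    ∃ α ∈ Ioo a b, ∃ τ ∈ Ioo a b, α ≠ τ ∧ F.height α τ = cos θ ∧
      ∀ t ∈ Icc a b, t ≠ α → t ≠ τ → cos θ < F.height α t := by
  have hinj' : InjOn F.x (Ioc a b) := injOn_Ioc_of_injOn_Ico hinj hclosed
  obtain ⟨t₀, ht₀, hlt₀⟩ : ∃ t ∈ Ioo a b, F.height a t < cos θ := by
    obtain ⟨t, ht, hlt⟩ := F.reverse.exists_height_lt_of_inner_T_neg (neg_lt_neg hab)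
      (by simpa using hclosed.symm) (by simpa [reverse] using hTb)
    exact ⟨-t, ⟨by linarith [ht.2], by linarith [ht.1]⟩, by simpa using hlt⟩
  obtain ⟨α, τ, h⟩ := F.exists_isLastContact_of_height_le le_rfl ht₀.1 ht₀.2.le hlt₀.le
  have hα : a < α := h.le_left.lt_of_ne fun ha ↦ hlt₀.not_ge (by
    simpa only [ha] using h.cos_le_height (ha.symm.trans_le ht₀.1.le) ht₀.2.le)
  obtain ⟨hcenter, hback⟩ := h.center_eq_and_backward hα hinj'
    (F.exists_height_lt_of_inner_T_neg hab hclosed hTa)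
  have hpast : ∀ t, a ≤ t → t < α → cos θ < F.height α t := fun t hat htα ↦
    (F.restrict le_rfl h.right_le).cos_lt_height_of_center_eq h.lt hcenter
      (hinj.mono (Ico_subset_Ico_right h.right_le))
      (fun hx ↦ h.lt.ne (hinj' ⟨hα, h.left_lt.le⟩ ⟨hα.trans h.lt, h.right_le⟩ hx)) hback hat htα
  have hτb : τ < b := h.right_le.lt_of_ne fun hτ ↦ by
    have hlt := hpast a le_rfl hα
    rw [height, hclosed, ← height] at hlt
    exact hlt.ne' (hτ ▸ h.height_eq)
  refine ⟨α, ⟨hα, h.left_lt⟩, τ, ⟨hα.trans h.lt, hτb⟩, h.lt.ne, h.height_eq,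
    fun t ht htα htτ ↦ ?_⟩
  rcases htα.lt_or_gt with htα | hαt
  · exact hpast t ht.1 htα
  rcases htτ.lt_or_gt with htτ | hτt
  · exact h.cos_lt_height_of_lt hαt htτ
  · exact (h.cos_lt_height τ t h.lt hτb hτt ht.2).trans_eq (height_congr_left hcenter t).symm

end Loop
end SphericalFrame

section Frenet

variable {θ a b s : ℝ}

lemma inner_deriv_left_eq_neg {f g : ℝ → E} {f' g' : E} {c : ℝ}
    (hf : HasDerivAt f f' s) (hg : HasDerivAt g g' s) (h : ∀ t, ⟪f t, g t⟫ = c) :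
    ⟪f', g s⟫ = -⟪f s, g'⟫ := by
  have hconst : HasDerivAt (fun _ ↦ c) (⟪f s, g'⟫ + ⟪f', g s⟫) s := by
    simpa only [h] using hf.inner ℝ hg
  linarith [hconst.unique (hasDerivAt_const s c)]

lemma inner_deriv_self_eq_zero {f : ℝ → E} {f' : E} {c : ℝ}
    (hf : HasDerivAt f f' s) (h : ∀ t, ⟪f t, f t⟫ = c) : ⟪f', f s⟫ = 0 := by
  have hneg := inner_deriv_left_eq_neg hf hf h
  rw [real_inner_comm f' (f s)] at hneg
  linarith

variable [Fact (finrank ℝ E = 3)] {x T n : ℝ → E} {v : ℝ}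

lemma hasDerivAt_tangent_of_orthonormal {T' : E}
    (horth : ∀ s, Orthonormal ℝ ![x s, T s, n s]) (hx : HasDerivAt x (v • T s) s)
    (hT : HasDerivAt T T' s) : HasDerivAt T (⟪T', n s⟫ • n s - v • x s) s := by
  have horth' (t : ℝ) := orthonormal_vec3_iff.mp (horth t)
  have hT'x : ⟪T', x s⟫ = -v := by
    rw [real_inner_comm, ← neg_eq_iff_eq_neg,
      ← inner_deriv_left_eq_neg hx hT fun t ↦ (horth' t).2.1, real_inner_smul_left,
      real_inner_self_eq_norm_sq, (horth' s).1.2.1]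
    ring
  have hT'T : ⟪T', T s⟫ = 0 := inner_deriv_self_eq_zero hT (c := 1) fun t ↦ by
    rw [real_inner_self_eq_norm_sq, (horth' t).1.2.1, one_pow]
  refine hT.congr_deriv ((eq_sum_inner_smul_of_orthonormal_vec3 (horth s) T').trans ?_)
  rw [hT'x, hT'T]
  module

lemma hasDerivAt_normal_of_orthonormal {T' n' : E}
    (horth : ∀ s, Orthonormal ℝ ![x s, T s, n s]) (hx : HasDerivAt x (v • T s) s)
    (hT : HasDerivAt T T' s) (hn : HasDerivAt n n' s) :
    HasDerivAt n (-(⟪T', n s⟫ • T s)) s := by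
  have horth' (t : ℝ) := orthonormal_vec3_iff.mp (horth t)
  have hn'x : ⟪n', x s⟫ = 0 := by
    rw [real_inner_comm, ← neg_eq_zero,
      ← inner_deriv_left_eq_neg hx hn fun t ↦ (horth' t).2.2.1, real_inner_smul_left,
      (horth' s).2.2.2, mul_zero]
  have hn'T : ⟪n', T s⟫ = -⟪T', n s⟫ := by
    rw [inner_deriv_left_eq_neg hT hn fun t ↦ (horth' t).2.2.2, neg_neg, real_inner_comm]
  have hn'n : ⟪n', n s⟫ = 0 := inner_deriv_self_eq_zero hn (c := 1) fun t ↦ by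
    rw [real_inner_self_eq_norm_sq, (horth' t).1.2.2, one_pow]
  refine hn.congr_deriv ((eq_sum_inner_smul_of_orthonormal_vec3 (horth s) n').trans ?_)
  rw [hn'x, hn'T, hn'n]
  module

end Frenet

section R3

open WithLp EuclideanSpace

lemma dot3_eq_dotProduct (z w : R3) : dot3 z w = z ⬝ᵥ w := (vec3_dotProduct z w).symm

lemma cross3_eq_crossProduct (z w : R3) : cross3 z w = z ⨯₃ w := (cross_apply z w).symm

lemma inner_toLp_eq_dot3 (z w : R3) :
    ⟪(toLp 2 z : EuclideanSpace ℝ (Fin 3)), toLp 2 w⟫ = dot3 z w := by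
  rw [EuclideanSpace.inner_toLp_toLp, star_trivial, dotProduct_comm, dot3_eq_dotProduct]

lemma norm_toLp_eq_norm3 (z : R3) : ‖(toLp 2 z : EuclideanSpace ℝ (Fin 3))‖ = norm3 z := by
  rw [norm_eq_sqrt_real_inner, inner_toLp_eq_dot3, norm3]

lemma hasDerivAt_toLp {f : ℝ → R3} {f' : R3} {s : ℝ} (hf : HasDerivAt f f' s) :
    HasDerivAt (fun t ↦ (toLp 2 (f t) : EuclideanSpace ℝ (Fin 3))) (toLp 2 f') s :=
  (PiLp.hasFDerivAt_toLp 2 (f s)).comp_hasDerivAt s hf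

lemma norm3_smul (c : ℝ) (z : R3) : norm3 (c • z) = |c| * norm3 z := by
  rw [← norm_toLp_eq_norm3, toLp_smul, norm_smul, norm_toLp_eq_norm3, Real.norm_eq_abs]

lemma norm3_cross3 {z w : R3} (h : dot3 z w = 0) : norm3 (cross3 z w) = norm3 z * norm3 w := by
  have hz : 0 ≤ dot3 z z := by rw [← inner_toLp_eq_dot3]; exact real_inner_self_nonneg
  rw [norm3, norm3, norm3, ← Real.sqrt_mul hz]
  rw [dot3_eq_dotProduct] at h
  simp only [dot3_eq_dotProduct, cross3_eq_crossProduct, cross_dot_cross]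
  rw [dotProduct_comm w z, h, mul_zero, sub_zero]

lemma differentiable_cross3 {f g : ℝ → R3} (hf : Differentiable ℝ f) (hg : Differentiable ℝ g) :
    Differentiable ℝ fun s ↦ cross3 (f s) (g s) := by
  have hf' (i : Fin 3) := differentiable_pi.mp hf i
  have hg' (i : Fin 3) := differentiable_pi.mp hg i
  refine differentiable_pi.mpr fun i ↦ ?_
  fin_cases i
  · exact ((hf' 1).mul (hg' 2)).sub ((hf' 2).mul (hg' 1))
  · exact ((hf' 2).mul (hg' 0)).sub ((hf' 0).mul (hg' 2))
  · exact ((hf' 0).mul (hg' 1)).sub ((hf' 1).mul (hg' 0))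

/-- The unit tangent `γ' / |γ'|` of a curve in S². -/
def unitTangent (γ : ℝ → R3) (s : ℝ) : R3 := (norm3 (deriv γ s))⁻¹ • deriv γ s

lemma dot3_unitTangent_unitNormal (γ : ℝ → R3) (s t : ℝ) :
    dot3 (unitTangent γ t) (unitNormal γ s) =
      (norm3 (deriv γ s))⁻¹ * (norm3 (deriv γ t))⁻¹ *
        det3 (γ s) (deriv γ s) (deriv γ t) := by
  simp only [unitTangent, unitNormal, det3, dot3_eq_dotProduct, cross3_eq_crossProduct,
    smul_dotProduct, dotProduct_smul, smul_eq_mul, triple_product_permutation (deriv γ t)]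
  ring

namespace IsRegularCurve

variable {γ : ℝ → R3}

lemma differentiable (h : IsRegularCurve γ) : Differentiable ℝ γ :=
  h.smooth.differentiable (by simp)

lemma differentiable_deriv (h : IsRegularCurve γ) : Differentiable ℝ (deriv γ) :=
  (contDiff_infty_iff_deriv.mp h.smooth).2.differentiable (by simp)

lemma norm3_deriv_pos (h : IsRegularCurve γ) (s : ℝ) : 0 < norm3 (deriv γ s) := by
  rw [← norm_toLp_eq_norm3, norm_pos_iff]
  simpa using h.reg s

lemma deriv_eq_smul_unitTangent (h : IsRegularCurve γ) (s : ℝ) :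
    deriv γ s = norm3 (deriv γ s) • unitTangent γ s := by
  rw [unitTangent, smul_inv_smul₀ (h.norm3_deriv_pos s).ne']

lemma hasDerivAt (h : IsRegularCurve γ) (s : ℝ) :
    HasDerivAt γ (norm3 (deriv γ s) • unitTangent γ s) s :=
  (h.differentiable s).hasDerivAt.congr_deriv (h.deriv_eq_smul_unitTangent s)

lemma dot3_deriv (h : IsRegularCurve γ) (s : ℝ) : dot3 (γ s) (deriv γ s) = 0 := by
  have hderiv := hasDerivAt_toLp (h.differentiable s).hasDerivAt
  rw [← inner_toLp_eq_dot3, real_inner_comm]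
  exact inner_deriv_self_eq_zero hderiv fun t ↦ (inner_toLp_eq_dot3 _ _).trans (h.sphere t)

lemma orthonormal (h : IsRegularCurve γ) (s : ℝ) :
    Orthonormal ℝ ![(toLp 2 (γ s) : EuclideanSpace ℝ (Fin 3)), toLp 2 (unitTangent γ s),
      toLp 2 (unitNormal γ s)] := by
  have hpos := h.norm3_deriv_pos s
  have hx : norm3 (γ s) = 1 := by rw [norm3, h.sphere, Real.sqrt_one]
  simp only [orthonormal_vec3_iff, norm_toLp_eq_norm3, inner_toLp_eq_dot3, unitTangent, unitNormal,
    norm3_smul, norm3_cross3 (h.dot3_deriv s), hx, one_mul, abs_inv, abs_of_pos hpos,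
    inv_mul_cancel₀ hpos.ne', and_self, true_and]
  simp only [dot3_eq_dotProduct, cross3_eq_crossProduct, dotProduct_smul, smul_dotProduct,
    dot_self_cross, dot_cross_self, smul_zero, and_self, and_true]
  rw [← dot3_eq_dotProduct, h.dot3_deriv, smul_zero]

lemma differentiable_norm3_deriv (h : IsRegularCurve γ) :
    Differentiable ℝ fun s ↦ norm3 (deriv γ s) := by
  intro s
  have hderiv := (hasDerivAt_toLp (h.differentiable_deriv s).hasDerivAt).differentiableAt
  simpa only [norm_toLp_eq_norm3] using hderiv.norm ℝ (by simpa using h.reg s)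

lemma differentiable_unitTangent (h : IsRegularCurve γ) : Differentiable ℝ (unitTangent γ) :=
  (h.differentiable_norm3_deriv.fun_inv fun s ↦ (h.norm3_deriv_pos s).ne').smul
    h.differentiable_deriv

lemma differentiable_unitNormal (h : IsRegularCurve γ) : Differentiable ℝ (unitNormal γ) :=
  (h.differentiable_norm3_deriv.fun_inv fun s ↦ (h.norm3_deriv_pos s).ne').smul
    (differentiable_cross3 h.differentiable h.differentiable_deriv)

lemma dot3_deriv_unitTangent_unitNormal (h : IsRegularCurve γ) (s : ℝ) :
    dot3 (deriv (unitTangent γ) s) (unitNormal γ s) = norm3 (deriv γ s) * kappa γ s := by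
  have hpos := (h.norm3_deriv_pos s).ne'
  have hderiv : deriv (deriv γ) s = norm3 (deriv γ s) • deriv (unitTangent γ) s
      + deriv (fun t ↦ norm3 (deriv γ t)) s • unitTangent γ s := by
    conv_lhs => rw [funext h.deriv_eq_smul_unitTangent]
    exact ((h.differentiable_norm3_deriv s).hasDerivAt.smul
      (h.differentiable_unitTangent s).hasDerivAt).deriv
  have hT : dot3 (unitTangent γ s) (unitNormal γ s) = 0 := by
    rw [← inner_toLp_eq_dot3]
    exact (orthonormal_vec3_iff.mp (h.orthonormal s)).2.2.2
  have hkappa : dot3 (deriv (deriv γ) s) (unitNormal γ s)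
      = norm3 (deriv γ s) ^ 2 * kappa γ s := by
    rw [kappa, det3, unitNormal]
    simp only [dot3_eq_dotProduct, cross3_eq_crossProduct, dotProduct_smul, smul_eq_mul]
    rw [triple_product_permutation (deriv (deriv γ) s)]
    field_simp
  simp only [dot3_eq_dotProduct, hderiv, add_dotProduct, smul_dotProduct, smul_eq_mul] at *
  rw [hT, mul_zero, add_zero] at hkappa
  exact mul_left_cancel₀ hpos (by linear_combination hkappa)

/-- The moving frame of a regular curve in S² whose geodesic curvature exceeds `μ` on `[a, b]`;
`π / 2 - arctan μ` is the spherical radius of a `μ`-circle. -/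
def sphericalFrame (h : IsRegularCurve γ) {μ a b : ℝ} (hμ : 0 < μ)
    (hκ : ∀ s ∈ Icc a b, μ < kappa γ s) :
    SphericalFrame (EuclideanSpace ℝ (Fin 3)) (π / 2 - arctan μ) a b where
  x s := toLp 2 (γ s)
  T s := toLp 2 (unitTangent γ s)
  n s := toLp 2 (unitNormal γ s)
  v s := norm3 (deriv γ s)
  k s := norm3 (deriv γ s) * kappa γ s
  angle_mem := ⟨sub_pos.mpr (arctan_lt_pi_div_two μ), sub_lt_self _ (arctan_pos.mpr hμ)⟩
  orthonormal := h.orthonormal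
  hasDerivAt_x s := hasDerivAt_toLp (h.hasDerivAt s)
  hasDerivAt_T s := by
    have hT := hasDerivAt_toLp (h.differentiable_unitTangent s).hasDerivAt
    have hF := hasDerivAt_tangent_of_orthonormal h.orthonormal (hasDerivAt_toLp (h.hasDerivAt s)) hT
    rwa [inner_toLp_eq_dot3, h.dot3_deriv_unitTangent_unitNormal] at hF
  hasDerivAt_n s := by
    have hT := hasDerivAt_toLp (h.differentiable_unitTangent s).hasDerivAt
    have hn := hasDerivAt_toLp (h.differentiable_unitNormal s).hasDerivAt
    have hF := hasDerivAt_normal_of_orthonormal h.orthonormal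
      (hasDerivAt_toLp (h.hasDerivAt s)) hT hn
    rwa [inner_toLp_eq_dot3, h.dot3_deriv_unitTangent_unitNormal] at hF
  v_pos s _ := h.norm3_deriv_pos s
  cos_mul_v_lt s hs := by
    rw [cos_pi_div_two_sub, sin_pi_div_two_sub, sin_arctan, cos_arctan]
    rw [div_mul_eq_mul_div, one_div_mul_eq_div, mul_comm μ]
    exact div_lt_div_of_pos_right (mul_lt_mul_of_pos_left (hκ s hs) (h.norm3_deriv_pos s))
      (by positivity)

lemma sphericalFrame_center (h : IsRegularCurve γ) {μ a b : ℝ} (hμ : 0 < μ)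
    (hκ : ∀ s ∈ Icc a b, μ < kappa γ s) (s : ℝ) :
    (h.sphericalFrame hμ hκ).center s = toLp 2 (tangentCenter μ γ s) := by
  rw [SphericalFrame.center, cos_pi_div_two_sub, sin_pi_div_two_sub, sin_arctan, cos_arctan,
    tangentCenter]
  simp only [sphericalFrame, toLp_smul, toLp_add, smul_add, smul_smul]
  rw [div_eq_inv_mul, one_div]

lemma dot3_tangentCenter_self (h : IsRegularCurve γ) (μ s : ℝ) :
    dot3 (tangentCenter μ γ s) (tangentCenter μ γ s) = 1 := by
  obtain ⟨⟨hx, -, hn⟩, -, hxn, -⟩ := orthonormal_vec3_iff.mp (h.orthonormal s)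
  have hsqrt : √(1 + μ ^ 2) ^ 2 = 1 + μ ^ 2 := sq_sqrt (by positivity)
  have hcoeff : ((√(1 + μ ^ 2))⁻¹ * μ) ^ 2 + (√(1 + μ ^ 2))⁻¹ ^ 2 = 1 := by
    field_simp
    rw [hsqrt, add_comm]
  have hnorm := norm_smul_add_smul_eq_one hx hn hxn hcoeff
  rw [← inner_toLp_eq_dot3, real_inner_self_eq_norm_sq, tangentCenter, smul_add, smul_smul]
  exact (congrArg (· ^ 2) hnorm).trans (one_pow 2)

theorem exists_bitangent_tangentCenter (h : IsRegularCurve γ) {μ a b : ℝ} (hμ : 0 < μ)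
    (hκ : ∀ s ∈ Icc a b, μ < kappa γ s) (hshell : IsNegativeShell γ a b) :
    ∃ α ∈ Ioo a b, ∃ τ ∈ Ioo a b, α ≠ τ ∧
      dot3 (γ α) (tangentCenter μ γ α) = μ / √(1 + μ ^ 2) ∧
      dot3 (γ τ) (tangentCenter μ γ α) = μ / √(1 + μ ^ 2) ∧
      ∀ t ∈ Icc a b, t ≠ α → t ≠ τ →
        μ / √(1 + μ ^ 2) < dot3 (γ t) (tangentCenter μ γ α) := by
  obtain ⟨⟨hab, hinj, hclosed, -⟩, hdet⟩ := hshell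
  have hpos : 0 < (norm3 (deriv γ a))⁻¹ * (norm3 (deriv γ b))⁻¹ :=
    mul_pos (inv_pos.mpr (h.norm3_deriv_pos a)) (inv_pos.mpr (h.norm3_deriv_pos b))
  have hTb : 0 < dot3 (unitTangent γ b) (unitNormal γ a) := by
    rw [dot3_unitTangent_unitNormal]
    exact mul_pos hpos hdet
  have hTa : dot3 (unitTangent γ a) (unitNormal γ b) < 0 := by
    have hswap : det3 (γ b) (deriv γ b) (deriv γ a) = -det3 (γ a) (deriv γ a) (deriv γ b) := by
      simp only [det3, dot3_eq_dotProduct, cross3_eq_crossProduct, hclosed]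
      rw [← cross_anticomm, dotProduct_neg]
    rw [dot3_unitTangent_unitNormal, hswap, mul_comm (norm3 (deriv γ b))⁻¹]
    exact mul_neg_of_pos_of_neg hpos (neg_neg_of_pos hdet)
  let F := h.sphericalFrame hμ hκ
  have hheight (s t : ℝ) : F.height s t = dot3 (γ t) (tangentCenter μ γ s) := by
    rw [SphericalFrame.height, h.sphericalFrame_center, ← inner_toLp_eq_dot3]
    rfl
  have hcos : cos (π / 2 - arctan μ) = μ / √(1 + μ ^ 2) := by
    rw [cos_pi_div_two_sub, sin_arctan]
  have hself (s : ℝ) : F.height s s = cos (π / 2 - arctan μ) := F.height_self s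
  have hexists := F.exists_bitangent_center hab ((toLp_injective 2).comp_injOn hinj)
    (congrArg (toLp 2) hclosed) ((inner_toLp_eq_dot3 _ _).trans_lt hTa)
    ((inner_toLp_eq_dot3 _ _).symm ▸ hTb)
  simp only [hheight, hcos] at hself hexists
  obtain ⟨α, hα, τ, hτ, hne, hατ, hinside⟩ := hexists
  exact ⟨α, hα, τ, hτ, hne, hself α, hατ, hinside⟩

end IsRegularCurve
end R3

end SphericalFrame

theorem stmt9_general (μ : ℝ) (γ : ℝ → R3) (a b : ℝ) (hμ : 0 < μ) (hreg : IsRegularCurve γ)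
    (hκ : ∀ s ∈ Set.Icc a b, μ < kappa γ s) (hshell : IsNegativeShell γ a b) :
    ∃ o : R3, dot3 o o = 1 ∧ γ '' Set.Icc a b ⊆ closure (muDisk μ o) ∧
      ∃ P Q : R3, P ≠ Q ∧ muCircle μ o ∩ γ '' Set.Icc a b = {P, Q} := by
  obtain ⟨α, hα, τ, hτ, hατ, hheightα, hheightτ, hinside⟩ :=
    hreg.exists_bitangent_tangentCenter hμ hκ hshell
  have hdisk : Set.MapsTo γ (Set.Icc a b \ {α, τ}) (muDisk μ (tangentCenter μ γ α)) :=
    fun t ⟨ht, hne⟩ ↦ ⟨hreg.sphere t, hinside t ht (fun h ↦ hne (.inl h)) fun h ↦ hne (.inr h)⟩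
  refine ⟨tangentCenter μ γ α, hreg.dot3_tangentCenter_self μ α,
    image_Icc_subset_closure_of_mapsTo_sdiff_finite hreg.smooth.continuous hshell.1.1
      (Set.toFinite {α, τ}) hdisk, γ α, γ τ,
    fun h ↦ hατ (hshell.1.2.1 (Set.Ioo_subset_Ico_self hα) (Set.Ioo_subset_Ico_self hτ) h),
    Set.Subset.antisymm ?_ ?_⟩
  · rintro _ ⟨⟨-, hcircle⟩, t, ht, rfl⟩
    by_contra hne
    have ht' : t ∉ ({α, τ} : Set ℝ) := fun h ↦ hne (h.imp (congrArg γ) (congrArg γ))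
    exact (hdisk ⟨ht, ht'⟩).2.ne' hcircle
  · rintro _ (rfl | rfl)
    · exact ⟨⟨hreg.sphere α, hheightα⟩, α, Set.Ioo_subset_Icc_self hα, rfl⟩
    · exact ⟨⟨hreg.sphere τ, hheightτ⟩, τ, Set.Ioo_subset_Icc_self hτ, rfl⟩

theorem stmt9 (μ : ℝ) (γ1 : ℝ → R3) (l a1 b1 : ℝ)
    (hμ : 0 < μ) (hreg : IsRegularCurve γ1) (hper : HasPeriod γ1 l)
    (hκ : ∀ s, μ < kappa γ1 s) (hint : b1 - a1 < l)
    (hshell : IsNegativeShell γ1 a1 b1) :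
    ∃ o : R3, dot3 o o = 1 ∧ γ1 '' Set.Icc a1 b1 ⊆ closure (muDisk μ o) ∧
      ∃ P Q : R3, P ≠ Q ∧ muCircle μ o ∩ γ1 '' Set.Icc a1 b1 = {P, Q} :=
  stmt9_general μ γ1 a1 b1 hμ hreg (fun s _ ↦ hκ s) hshell
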